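/- arXiv:2410.17336 — 2 statements merged into one kernel-verified Lean document; each statement's English description precedes it below -/
import Mathlib

section
/- Let N be a norm on ℝ^d satisfying ‖w‖₂ ≤ R·N(w) for all w ∈ ℝ^d, let α, L > 0, and let Σ be a symmetric positive semidefinite d×d matrix with vᵀΣv ≥ α·N(v)² for all v ∈ ℝ^d. Fix x₀, v₀ ∈ ℝ^d and r₀ ∈ ℝ and define g(x) := r₀ + ⟨v₀, x − x₀⟩ + (1/2)(x − x₀)ᵀΣ(x − x₀) − (L/6)‖x − x₀‖₂³. Then g is twice continuously differentiable, and for every x with ‖x − x₀‖₂ ≤ α/(2R²L) and every v ∈ ℝ^d: vᵀ∇²g(x)v ≥ (α/2)·N(v)². -/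
open RealInnerProductSpace

/-!
The Hessian of `‖·‖ ^ p`, for `p > 2`, is `p` times the derivative of the vector field
`y ↦ ‖y‖ ^ (p - 2) • y`, whose operator norm is at most `(p - 1) * ‖y‖ ^ (p - 2)`; this bound also
gives its continuity at the origin, the only place where smoothness is in doubt. For `p = 3` the
cubic term of `g` thus lowers the second derivative along `v` by at most `L * ‖x - x₀‖ * ‖v‖ ^ 2`,
and `‖v‖ ≤ R * N v` makes this at most half of the `α * N v ^ 2` supplied by the quadratic term.
-/

section NormRpow

variable {E : Type*} [NormedAddCommGroup E] [InnerProductSpace ℝ E]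

theorem hasFDerivAt_norm_rpow_of_ne_zero (q : ℝ) {x : E} (hx : x ≠ 0) :
    HasFDerivAt (fun y : E ↦ ‖y‖ ^ q) ((q * ‖x‖ ^ (q - 2)) • innerSL ℝ x) x := by
  have h := ((hasStrictFDerivAt_norm_sq x).rpow_const (p := q / 2) (by simp [hx])).hasFDerivAt
  simp_rw [← Real.rpow_natCast_mul (norm_nonneg _), ← Nat.cast_smul_eq_nsmul ℝ, smul_smul] at h
  convert! h using 2 <;> ring_nf

/-- The derivative at `x` of the radial vector field `y ↦ ‖y‖ ^ q • y`, for `q > 0`. At `x = 0`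
the coefficient `‖x‖ ^ (q - 2)` is a junk value, which is harmless since it multiplies `0`. -/
noncomputable def normRpowSMulFDeriv (q : ℝ) (x : E) : E →L[ℝ] E :=
  ‖x‖ ^ q • ContinuousLinearMap.id ℝ E + (q * ‖x‖ ^ (q - 2)) • (innerSL ℝ x).smulRight x

theorem normRpowSMulFDeriv_zero {q : ℝ} (hq : q ≠ 0) : normRpowSMulFDeriv q (0 : E) = 0 := by
  simp [normRpowSMulFDeriv, hq]

theorem norm_normRpowSMulFDeriv_le {q : ℝ} (hq : 0 < q) (x : E) :
    ‖normRpowSMulFDeriv q x‖ ≤ (1 + q) * ‖x‖ ^ q := by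
  rcases eq_or_ne x 0 with rfl | hx
  · simp [normRpowSMulFDeriv_zero, hq.ne']
  have radial_eq : ‖(q * ‖x‖ ^ (q - 2)) • (innerSL ℝ x).smulRight x‖ = q * ‖x‖ ^ q := by
    rw [norm_smul, ContinuousLinearMap.norm_smulRight_apply, innerSL_apply_norm,
      Real.norm_of_nonneg (by positivity), mul_assoc, ← sq, ← Real.rpow_natCast ‖x‖ 2,
      ← Real.rpow_add (norm_pos_iff.2 hx)]
    norm_num
  have scalar_le : ‖‖x‖ ^ q • ContinuousLinearMap.id ℝ E‖ ≤ ‖x‖ ^ q := by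
    rw [norm_smul, Real.norm_of_nonneg (by positivity)]
    exact mul_le_of_le_one_right (by positivity) ContinuousLinearMap.norm_id_le
  calc ‖normRpowSMulFDeriv q x‖
      ≤ ‖‖x‖ ^ q • ContinuousLinearMap.id ℝ E‖ +
          ‖(q * ‖x‖ ^ (q - 2)) • (innerSL ℝ x).smulRight x‖ := norm_add_le _ _
    _ ≤ ‖x‖ ^ q + q * ‖x‖ ^ q := add_le_add scalar_le radial_eq.le
    _ = (1 + q) * ‖x‖ ^ q := by ring

theorem hasFDerivAt_norm_rpow_smul {q : ℝ} (hq : 0 < q) (x : E) :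
    HasFDerivAt (fun y : E ↦ ‖y‖ ^ q • y) (normRpowSMulFDeriv q x) x := by
  rcases eq_or_ne x 0 with rfl | hx
  · have rpow_isLittleO_one : (fun y : E ↦ ‖y‖ ^ q) =o[nhds 0] (fun _ ↦ (1 : ℝ)) := by
      rw [Asymptotics.isLittleO_one_iff]
      simpa [hq.ne'] using (continuous_norm.rpow_const fun _ ↦ .inr hq.le).tendsto (0 : E)
    rw [normRpowSMulFDeriv_zero hq.ne', hasFDerivAt_iff_isLittleO_nhds_zero]
    simpa using rpow_isLittleO_one.smul_isBigO (Asymptotics.isBigO_refl (fun y : E ↦ y) (nhds 0))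
  · refine ((hasFDerivAt_norm_rpow_of_ne_zero q hx).smul (hasFDerivAt_id x)).congr_fderiv ?_
    ext v
    simp [normRpowSMulFDeriv, smul_smul]

theorem continuous_normRpowSMulFDeriv {q : ℝ} (hq : 0 < q) :
    Continuous (normRpowSMulFDeriv q : E → E →L[ℝ] E) := by
  refine continuous_iff_continuousAt.2 fun x ↦ ?_
  rcases eq_or_ne x 0 with rfl | hx
  · rw [ContinuousAt, normRpowSMulFDeriv_zero hq.ne']
    refine squeeze_zero_norm (norm_normRpowSMulFDeriv_le hq) ?_
    have bound_continuous : Continuous fun y : E ↦ (1 + q) * ‖y‖ ^ q :=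
      continuous_const.mul (continuous_norm.rpow_const fun _ ↦ .inr hq.le)
    simpa [hq.ne'] using bound_continuous.tendsto 0
  · have rpow_continuousAt (s : ℝ) : ContinuousAt (fun y : E ↦ ‖y‖ ^ s) x :=
      continuousAt_id.norm.rpow_const (.inl (norm_ne_zero_iff.2 hx))
    have radial_continuous : Continuous fun y : E ↦ (innerSL ℝ y).smulRight y :=
      ((ContinuousLinearMap.smulRightL ℝ E E).continuous.comp (innerSL ℝ).continuous).clm_apply
        continuous_id
    exact ((rpow_continuousAt q).smul continuousAt_const).add
      ((continuousAt_const.mul (rpow_continuousAt (q - 2))).smul radial_continuous.continuousAt)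

theorem contDiff_norm_rpow_smul {q : ℝ} (hq : 0 < q) :
    ContDiff ℝ 1 (fun y : E ↦ ‖y‖ ^ q • y) :=
  contDiff_one_iff_hasFDerivAt.2
    ⟨normRpowSMulFDeriv q, continuous_normRpowSMulFDeriv hq, hasFDerivAt_norm_rpow_smul hq⟩

theorem fderiv_norm_rpow_eq_innerSL {p : ℝ} (hp : 1 < p) :
    fderiv ℝ (fun y : E ↦ ‖y‖ ^ p) = fun x ↦ p • innerSL ℝ (‖x‖ ^ (p - 2) • x) := by
  ext1 x
  rw [fderiv_norm_rpow x hp, map_smul, smul_smul]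

theorem contDiff_two_norm_rpow {p : ℝ} (hp : 2 < p) : ContDiff ℝ 2 (fun y : E ↦ ‖y‖ ^ p) := by
  have one_lt_p : 1 < p := one_lt_two.trans hp
  rw [← one_add_one_eq_two, contDiff_succ_iff_fderiv, fderiv_norm_rpow_eq_innerSL one_lt_p]
  exact ⟨differentiable_norm_rpow one_lt_p, by simp,
    ((innerSL ℝ).contDiff.comp (contDiff_norm_rpow_smul (sub_pos.2 hp))).const_smul p⟩

theorem fderiv_fderiv_norm_rpow_apply {p : ℝ} (hp : 2 < p) (x v w : E) :
    fderiv ℝ (fderiv ℝ fun y : E ↦ ‖y‖ ^ p) x v w =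
      p * ⟪normRpowSMulFDeriv (p - 2) x v, w⟫ := by
  have hasFDerivAt_gradient := ((innerSL ℝ).hasFDerivAt.comp x
    (hasFDerivAt_norm_rpow_smul (sub_pos.2 hp) x)).const_smul p
  rw [fderiv_norm_rpow_eq_innerSL (one_lt_two.trans hp)]
  exact DFunLike.congr_fun (DFunLike.congr_fun hasFDerivAt_gradient.fderiv v) w

theorem fderiv_fderiv_norm_rpow_apply_self_le {p : ℝ} (hp : 2 < p) (x v : E) :
    fderiv ℝ (fderiv ℝ fun y : E ↦ ‖y‖ ^ p) x v v ≤ p * (p - 1) * ‖x‖ ^ (p - 2) * ‖v‖ ^ 2 := by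
  have opNorm_le : ‖normRpowSMulFDeriv (p - 2) x v‖ ≤ (1 + (p - 2)) * ‖x‖ ^ (p - 2) * ‖v‖ :=
    ContinuousLinearMap.le_of_opNorm_le _ (norm_normRpowSMulFDeriv_le (sub_pos.2 hp) x) v
  calc fderiv ℝ (fderiv ℝ fun y : E ↦ ‖y‖ ^ p) x v v
      = p * ⟪normRpowSMulFDeriv (p - 2) x v, v⟫ := fderiv_fderiv_norm_rpow_apply hp x v v
    _ ≤ p * (‖normRpowSMulFDeriv (p - 2) x v‖ * ‖v‖) := by
      gcongr
      exact real_inner_le_norm _ _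
    _ ≤ p * ((1 + (p - 2)) * ‖x‖ ^ (p - 2) * ‖v‖ * ‖v‖) := by gcongr
    _ = p * (p - 1) * ‖x‖ ^ (p - 2) * ‖v‖ ^ 2 := by ring

theorem contDiff_two_norm_cube : ContDiff ℝ 2 (fun y : E ↦ ‖y‖ ^ 3) := by
  exact_mod_cast contDiff_two_norm_rpow (E := E) (p := (3 : ℕ)) (by norm_num)

theorem fderiv_fderiv_norm_cube_apply_self_le (x v : E) :
    fderiv ℝ (fderiv ℝ fun y : E ↦ ‖y‖ ^ 3) x v v ≤ 6 * ‖x‖ * ‖v‖ ^ 2 := by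
  have h := fderiv_fderiv_norm_rpow_apply_self_le (p := (3 : ℕ)) (by norm_num) x v
  simp only [Real.rpow_natCast] at h
  convert h using 3 <;> norm_num

end NormRpow

section SecondDerivative

variable {𝕜 E F : Type*} [NontriviallyNormedField 𝕜] [NormedAddCommGroup E] [NormedSpace 𝕜 E]
  [NormedAddCommGroup F] [NormedSpace 𝕜 F]

theorem fderiv_fderiv_sub {f g : E → F} (hf : ContDiff 𝕜 2 f) (hg : ContDiff 𝕜 2 g) :
    fderiv 𝕜 (fderiv 𝕜 (f - g)) = fderiv 𝕜 (fderiv 𝕜 f) - fderiv 𝕜 (fderiv 𝕜 g) := by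
  have fderiv_eq : fderiv 𝕜 (f - g) = fderiv 𝕜 f - fderiv 𝕜 g :=
    funext fun x ↦ fderiv_sub (hf.differentiable two_ne_zero x) (hg.differentiable two_ne_zero x)
  have differentiable_fderiv {h : E → F} (hh : ContDiff 𝕜 2 h) : Differentiable 𝕜 (fderiv 𝕜 h) :=
    (hh.fderiv_right one_add_one_eq_two.le).differentiable one_ne_zero
  rw [fderiv_eq]
  exact funext fun x ↦ fderiv_sub (differentiable_fderiv hf x) (differentiable_fderiv hg x)

theorem fderiv_fderiv_const_smul (c : 𝕜) (f : E → F) :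
    fderiv 𝕜 (fderiv 𝕜 (c • f)) = c • fderiv 𝕜 (fderiv 𝕜 f) := by
  rw [fderiv_const_smul_field]
  exact fderiv_const_smul_field (f := fderiv 𝕜 f) c

theorem fderiv_fderiv_quadratic (c : F) (l : E →L[𝕜] F) (B : E →L[𝕜] E →L[𝕜] F) (x : E) :
    fderiv 𝕜 (fderiv 𝕜 fun y ↦ c + l y + B y y) x = B + B.flip := by
  have fderiv_eq : fderiv 𝕜 (fun y ↦ c + l y + B y y) = fun y ↦ l + (B + B.flip) y := by
    ext1 y
    have h := (l.hasFDerivAt.const_add c).add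
      (B.hasFDerivAt_of_bilinear (hasFDerivAt_id y) (hasFDerivAt_id y))
    exact h.fderiv
  rw [fderiv_eq]
  exact ((B + B.flip).hasFDerivAt.const_add l).fderiv

theorem fderiv_fderiv_comp_sub_const (f : E → F) (a x : E) :
    fderiv 𝕜 (fderiv 𝕜 fun y ↦ f (y - a)) x = fderiv 𝕜 (fderiv 𝕜 f) (x - a) := by
  have fderiv_eq : fderiv 𝕜 (fun y ↦ f (y - a)) = fun y ↦ fderiv 𝕜 f (y - a) :=
    funext fun y ↦ fderiv_comp_sub a
  rw [fderiv_eq, fderiv_comp_sub]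

end SecondDerivative

section QuadraticSubCube

variable {E : Type*} [NormedAddCommGroup E] [InnerProductSpace ℝ E]

/-- A second-order Taylor polynomial with constant term `r`, linear term `l` and quadratic term
`B y y / 2`, lowered by the cubic error term `L / 6 * ‖y‖ ^ 3`. It is the
function `g` of the theorem, recentred so that `x₀ = 0`. -/
noncomputable def quadraticSubCube (r : ℝ) (l : E →L[ℝ] ℝ) (B : E →L[ℝ] E →L[ℝ] ℝ) (L : ℝ)
    (y : E) : ℝ :=
  r + l y + (1 / 2) * B y y - (L / 6) * ‖y‖ ^ 3

variable (r : ℝ) (l : E →L[ℝ] ℝ) (B : E →L[ℝ] E →L[ℝ] ℝ)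

theorem contDiff_quadratic {n : WithTop ℕ∞} : ContDiff ℝ n fun y ↦ r + l y + (1 / 2) * B y y := by
  fun_prop

theorem contDiff_quadraticSubCube (L : ℝ) : ContDiff ℝ 2 (quadraticSubCube r l B L) :=
  (contDiff_quadratic r l B).sub (contDiff_const.mul contDiff_two_norm_cube)

theorem fderiv_fderiv_quadraticSubCube_apply_self (L : ℝ) (y v : E) :
    fderiv ℝ (fderiv ℝ (quadraticSubCube r l B L)) y v v =
      B v v - L / 6 * fderiv ℝ (fderiv ℝ fun z : E ↦ ‖z‖ ^ 3) y v v := by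
  have hessian_quadratic : fderiv ℝ (fderiv ℝ fun z ↦ r + l z + (1 / 2) * B z z) y v v = B v v :=
    calc _ = ((1 / 2 : ℝ) • B + ((1 / 2 : ℝ) • B).flip) v v :=
          congr($(fderiv_fderiv_quadratic r l ((1 / 2 : ℝ) • B) y) v v)
      _ = 1 / 2 * B v v + 1 / 2 * B v v := rfl
      _ = B v v := by ring
  have sub_cube_eq : quadraticSubCube r l B L =
      (fun z ↦ r + l z + (1 / 2) * B z z) - (L / 6) • fun z ↦ ‖z‖ ^ 3 := rfl
  have contDiff_cube : ContDiff ℝ 2 ((L / 6) • fun z : E ↦ ‖z‖ ^ 3) :=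
    contDiff_two_norm_cube.const_smul (L / 6)
  rw [sub_cube_eq, fderiv_fderiv_sub (contDiff_quadratic r l B) contDiff_cube,
    fderiv_fderiv_const_smul, ← hessian_quadratic]
  rfl

theorem le_fderiv_fderiv_quadraticSubCube_apply_self {L : ℝ} (hL : 0 ≤ L) (y v : E) :
    B v v - L * ‖y‖ * ‖v‖ ^ 2 ≤ fderiv ℝ (fderiv ℝ (quadraticSubCube r l B L)) y v v := by
  rw [fderiv_fderiv_quadraticSubCube_apply_self]
  linarith [mul_le_mul_of_nonneg_left (fderiv_fderiv_norm_cube_apply_self_le y v)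
    (div_nonneg hL (by norm_num : (0 : ℝ) ≤ 6))]

end QuadraticSubCube

theorem stmt1_general {E : Type*} [NormedAddCommGroup E] [InnerProductSpace ℝ E]
    (N : E → ℝ) (R α L : ℝ) (hR : 0 < R) (hL : 0 < L) (hNR : ∀ w, ‖w‖ ≤ R * N w)
    (B : E →L[ℝ] E →L[ℝ] ℝ) (hB : ∀ v, α * N v ^ 2 ≤ B v v)
    (x₀ : E) (l : E →L[ℝ] ℝ) (r : ℝ) (g : E → ℝ)
    (hg : ∀ x, g x = r + l (x - x₀) + (1 / 2) * B (x - x₀) (x - x₀) - (L / 6) * ‖x - x₀‖ ^ 3) :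
    ContDiff ℝ 2 g ∧ ∀ x, ‖x - x₀‖ ≤ α / (2 * R ^ 2 * L) →
      ∀ v, (α / 2) * N v ^ 2 ≤ fderiv ℝ (fderiv ℝ g) x v v := by
  obtain rfl : g = fun x ↦ quadraticSubCube r l B L (x - x₀) := funext hg
  refine ⟨(contDiff_quadraticSubCube r l B L).comp (contDiff_id.sub contDiff_const),
    fun x hx v ↦ ?_⟩
  have norm_sq_le : ‖v‖ ^ 2 ≤ (R * N v) ^ 2 := by gcongr; exact hNR v
  have cubic_loss_le : L * ‖x - x₀‖ * ‖v‖ ^ 2 ≤ α / 2 * N v ^ 2 :=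
    calc L * ‖x - x₀‖ * ‖v‖ ^ 2
        ≤ L * ‖x - x₀‖ * (R * N v) ^ 2 := by gcongr
      _ ≤ L * (α / (2 * R ^ 2 * L)) * (R * N v) ^ 2 := by gcongr
      _ = α / 2 * N v ^ 2 := by field_simp
  rw [fderiv_fderiv_comp_sub_const]
  calc α / 2 * N v ^ 2
      = α * N v ^ 2 - α / 2 * N v ^ 2 := by ring
    _ ≤ B v v - L * ‖x - x₀‖ * ‖v‖ ^ 2 := sub_le_sub (hB v) cubic_loss_le
    _ ≤ _ := le_fderiv_fderiv_quadraticSubCube_apply_self r l B hL.le (x - x₀) v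

/-- For a norm `N` on `ℝ^d` with `‖w‖₂ ≤ R·N(w)`, a symmetric PSD matrix
`Σ` with `vᵀΣv ≥ α·N(v)²`, the quasi-quadratic function
`g(x) = r₀ + ⟨v₀, x−x₀⟩ + ½ (x−x₀)ᵀΣ(x−x₀) − (L/6)‖x−x₀‖³` is `C²` and satisfies
`vᵀ∇²g(x)v ≥ (α/2)N(v)²` whenever `‖x−x₀‖ ≤ α/(2R²L)`. -/
theorem stmt1 {d : ℕ} (N : EuclideanSpace ℝ (Fin d) → ℝ) (R α L : ℝ)
    (hR : 0 < R) (hα : 0 < α) (hL : 0 < L)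
    (hN_add : ∀ x y, N (x + y) ≤ N x + N y)
    (hN_smul : ∀ (c : ℝ) x, N (c • x) = |c| * N x)
    (hN_def : ∀ x, N x = 0 → x = 0)
    (hNR : ∀ w : EuclideanSpace ℝ (Fin d), ‖w‖ ≤ R * N w)
    (A : Matrix (Fin d) (Fin d) ℝ) (hA : A.PosSemidef)
    (hAN : ∀ v : EuclideanSpace ℝ (Fin d), α * N v ^ 2 ≤ ⟪v, Matrix.toEuclideanLin A v⟫)
    (x₀ v₀ : EuclideanSpace ℝ (Fin d)) (r₀ : ℝ)
    (g : EuclideanSpace ℝ (Fin d) → ℝ)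
    (hg : ∀ x, g x = r₀ + ⟪v₀, x - x₀⟫
        + (1 / 2) * ⟪x - x₀, Matrix.toEuclideanLin A (x - x₀)⟫
        - (L / 6) * ‖x - x₀‖ ^ 3) :
    ContDiff ℝ 2 g ∧
      ∀ x : EuclideanSpace ℝ (Fin d), ‖x - x₀‖ ≤ α / (2 * R ^ 2 * L) →
        ∀ v : EuclideanSpace ℝ (Fin d),
          (α / 2) * N v ^ 2 ≤ fderiv ℝ (fderiv ℝ g) x v v := by
  exact stmt1_general N R α L hR hL hNR
    ((innerSL ℝ).flip ∘L LinearMap.toContinuousLinearMap (Matrix.toEuclideanLin A)).flip hAN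
    x₀ (innerSL ℝ v₀) r₀ g hg
end

section
/- Let N be a norm on ℝ^d satisfying r·‖w‖₂ ≤ N(w) ≤ R·‖w‖₂ for all w, where 0 < r ≤ R, and let Σ be a symmetric positive semidefinite d×d matrix with operator norm at most c₂. Then for all unit vectors v, ṽ ∈ ℝ^d (‖v‖₂ = ‖ṽ‖₂ = 1): |vᵀΣv / N(v)² − ṽᵀΣṽ / N(ṽ)²| ≤ (4c₂R / r³)·‖v − ṽ‖₂. -/
open RealInnerProductSpace

/-!
Since `⟪v, T v⟫ / N v ^ 2` is the quadratic form of `T` evaluated at `(N v)⁻¹ • v`, it suffices to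
compose two estimates. The rescaled vectors have length at most `r⁻¹`, and there the quadratic form
has Lipschitz constant `2 * c / r`. The rescaling itself moves nearby vectors apart by a factor of
at most `(1 + R / r) / (r * ‖v‖) ≤ 2 * R / (r ^ 2 * ‖v‖)`, because `N` is `R`-Lipschitz.
-/

theorem norm_inner_map_self_sub_inner_map_self_le {𝕜 E : Type*} [RCLike 𝕜]
    [SeminormedAddCommGroup E] [InnerProductSpace 𝕜 E] (T : E →ₗ[𝕜] E) {c : ℝ}
    (hT : ∀ u, ‖T u‖ ≤ c * ‖u‖) (x y : E) :
    ‖inner 𝕜 x (T x) - inner 𝕜 y (T y)‖ ≤ c * (‖x‖ + ‖y‖) * ‖x - y‖ := by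
  have telescope : inner 𝕜 x (T x) - inner 𝕜 y (T y)
      = inner 𝕜 x (T (x - y)) + inner 𝕜 (x - y) (T y) := by
    rw [map_sub, inner_sub_right, inner_sub_left]
    ring
  calc ‖inner 𝕜 x (T x) - inner 𝕜 y (T y)‖
      ≤ ‖x‖ * ‖T (x - y)‖ + ‖x - y‖ * ‖T y‖ := by
        rw [telescope]
        exact norm_add_le_of_le (norm_inner_le_norm _ _) (norm_inner_le_norm _ _)
    _ ≤ ‖x‖ * (c * ‖x - y‖) + ‖x - y‖ * (c * ‖y‖) := by gcongr <;> exact hT _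
    _ = c * (‖x‖ + ‖y‖) * ‖x - y‖ := by ring

theorem abs_sub_le_of_subadditive_of_le_mul_norm {E : Type*} [SeminormedAddCommGroup E]
    {N : E → ℝ} {R : ℝ} (hN_add : ∀ x y, N (x + y) ≤ N x + N y) (hN_ub : ∀ x, N x ≤ R * ‖x‖)
    (x y : E) : |N x - N y| ≤ R * ‖x - y‖ := by
  have sub_le (x y : E) : N x - N y ≤ R * ‖x - y‖ := by
    have triangle := hN_add (x - y) y
    rw [sub_add_cancel] at triangle
    linarith [hN_ub (x - y)]
  exact abs_sub_le_iff.2 ⟨sub_le x y, norm_sub_rev x y ▸ sub_le y x⟩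

section Rescaling

variable {E : Type*} [SeminormedAddCommGroup E] [NormedSpace ℝ E]

theorem norm_inv_smul_le_inv {r a : ℝ} (hr : 0 < r) (ha : 0 < a) {v : E} (hv : r * ‖v‖ ≤ a) :
    ‖a⁻¹ • v‖ ≤ r⁻¹ := by
  rw [norm_smul, norm_inv, Real.norm_of_nonneg ha.le, inv_mul_le_iff₀ ha, ← div_eq_mul_inv,
    le_div_iff₀' hr]
  exact hv

theorem norm_inv_smul_sub_inv_smul_le {a b : ℝ} (ha : 0 < a) (hb : b ≠ 0) (v w : E) :
    ‖a⁻¹ • v - b⁻¹ • w‖ ≤ a⁻¹ * (‖v - w‖ + |a - b| * ‖b⁻¹ • w‖) := by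
  have factor : a⁻¹ • v - b⁻¹ • w = a⁻¹ • ((v - w) - (a - b) • b⁻¹ • w) := by
    match_scalars <;> field_simp
    ring
  rw [factor, norm_smul, norm_inv, Real.norm_of_nonneg ha.le]
  gcongr
  exact (norm_sub_le _ _).trans_eq (by rw [norm_smul, Real.norm_eq_abs])

theorem norm_inv_smul_sub_inv_smul_le_of_subadditive {N : E → ℝ} {r R : ℝ} (hr : 0 < r)
    (hN_add : ∀ x y, N (x + y) ≤ N x + N y) (hN_lb : ∀ x, r * ‖x‖ ≤ N x)
    (hN_ub : ∀ x, N x ≤ R * ‖x‖) {v w : E} (hv : 0 < ‖v‖) (hw : 0 < ‖w‖) :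
    ‖(N v)⁻¹ • v - (N w)⁻¹ • w‖ ≤ 2 * R / r ^ 2 * (‖v - w‖ / ‖v‖) := by
  have hNv : 0 < N v := (mul_pos hr hv).trans_le (hN_lb v)
  have hNw : 0 < N w := (mul_pos hr hw).trans_le (hN_lb w)
  have hrR : r ≤ R := le_of_mul_le_mul_right ((hN_lb v).trans (hN_ub v)) hv
  calc ‖(N v)⁻¹ • v - (N w)⁻¹ • w‖
      ≤ (N v)⁻¹ * (‖v - w‖ + |N v - N w| * ‖(N w)⁻¹ • w‖) :=
        norm_inv_smul_sub_inv_smul_le hNv hNw.ne' v w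
    _ ≤ (r * ‖v‖)⁻¹ * (‖v - w‖ + R * ‖v - w‖ * r⁻¹) := by
        gcongr
        · exact hN_lb v
        · exact mul_nonneg (hr.le.trans hrR) (norm_nonneg _)
        · exact abs_sub_le_of_subadditive_of_le_mul_norm hN_add hN_ub v w
        · exact norm_inv_smul_le_inv hr hNw (hN_lb w)
    _ = (r + R) / r ^ 2 * (‖v - w‖ / ‖v‖) := by field_simp
    _ ≤ 2 * R / r ^ 2 * (‖v - w‖ / ‖v‖) := by
        gcongr
        linarith

end Rescaling

theorem inner_inv_smul_map_inv_smul {E : Type*} [SeminormedAddCommGroup E]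
    [InnerProductSpace ℝ E] (T : E →ₗ[ℝ] E) (a : ℝ) (v : E) :
    ⟪a⁻¹ • v, T (a⁻¹ • v)⟫ = ⟪v, T v⟫ / a ^ 2 := by
  rw [map_smul, real_inner_smul_left, real_inner_smul_right]
  ring

theorem stmt16_general {E : Type*} [NormedAddCommGroup E] [InnerProductSpace ℝ E]
    {N : E → ℝ} {r R c : ℝ} (hr : 0 < r) (hN_add : ∀ x y, N (x + y) ≤ N x + N y)
    (hN_lb : ∀ x, r * ‖x‖ ≤ N x) (hN_ub : ∀ x, N x ≤ R * ‖x‖)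
    (T : E →ₗ[ℝ] E) (hT : ∀ u, ‖T u‖ ≤ c * ‖u‖) {v w : E} (hv : v ≠ 0) (hw : w ≠ 0) :
    |⟪v, T v⟫ / N v ^ 2 - ⟪w, T w⟫ / N w ^ 2| ≤ 4 * c * R / r ^ 3 * (‖v - w‖ / ‖v‖) := by
  have norm_rescaled_le {u : E} (hu : u ≠ 0) : ‖(N u)⁻¹ • u‖ ≤ r⁻¹ :=
    norm_inv_smul_le_inv hr ((mul_pos hr (norm_pos_iff.2 hu)).trans_le (hN_lb u)) (hN_lb u)
  have hc : 0 ≤ c :=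
    nonneg_of_mul_nonneg_left ((norm_nonneg _).trans (hT v)) (norm_pos_iff.2 hv)
  rw [← inner_inv_smul_map_inv_smul, ← inner_inv_smul_map_inv_smul]
  calc |⟪(N v)⁻¹ • v, T ((N v)⁻¹ • v)⟫ - ⟪(N w)⁻¹ • w, T ((N w)⁻¹ • w)⟫|
      ≤ c * (‖(N v)⁻¹ • v‖ + ‖(N w)⁻¹ • w‖) * ‖(N v)⁻¹ • v - (N w)⁻¹ • w‖ :=
        norm_inner_map_self_sub_inner_map_self_le T hT _ _
    _ ≤ c * (r⁻¹ + r⁻¹) * (2 * R / r ^ 2 * (‖v - w‖ / ‖v‖)) := by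
        gcongr
        · exact norm_rescaled_le hv
        · exact norm_rescaled_le hw
        · exact norm_inv_smul_sub_inv_smul_le_of_subadditive hr hN_add hN_lb hN_ub
            (norm_pos_iff.2 hv) (norm_pos_iff.2 hw)
    _ = 4 * c * R / r ^ 3 * (‖v - w‖ / ‖v‖) := by ring

/-- For a norm `N` with `r‖w‖₂ ≤ N(w) ≤ R‖w‖₂` and a symmetric PSD matrix
`Σ` with operator norm at most `c₂`, the normalized quadratic form `v ↦ vᵀΣv/N(v)²` is
`(4c₂R/r³)`-Lipschitz on the Euclidean unit sphere. -/
theorem stmt16 {d : ℕ} (N : EuclideanSpace ℝ (Fin d) → ℝ) (r R c₂ : ℝ)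
    (hr : 0 < r) (hrR : r ≤ R)
    (hN_add : ∀ x y, N (x + y) ≤ N x + N y)
    (hN_smul : ∀ (c : ℝ) x, N (c • x) = |c| * N x)
    (hN_lb : ∀ w : EuclideanSpace ℝ (Fin d), r * ‖w‖ ≤ N w)
    (hN_ub : ∀ w : EuclideanSpace ℝ (Fin d), N w ≤ R * ‖w‖)
    (A : Matrix (Fin d) (Fin d) ℝ) (hA : A.PosSemidef)
    (hAop : ∀ u : EuclideanSpace ℝ (Fin d), ‖Matrix.toEuclideanLin A u‖ ≤ c₂ * ‖u‖)
    (v w : EuclideanSpace ℝ (Fin d)) (hv : ‖v‖ = 1) (hw : ‖w‖ = 1) :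
    |⟪v, Matrix.toEuclideanLin A v⟫ / N v ^ 2
        - ⟪w, Matrix.toEuclideanLin A w⟫ / N w ^ 2|
      ≤ (4 * c₂ * R / r ^ 3) * ‖v - w‖ := by
  have hv₀ : v ≠ 0 := ne_zero_of_norm_ne_zero (hv ▸ one_ne_zero)
  have hw₀ : w ≠ 0 := ne_zero_of_norm_ne_zero (hw ▸ one_ne_zero)
  simpa [hv] using stmt16_general hr hN_add hN_lb hN_ub (Matrix.toEuclideanLin A) hAop hv₀ hw₀
end
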